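/- Let χ be an irreducible character of a finite group G with K = ker(χ). If K is not contained in the Fitting subgroup F(G) of G, then there exists an irreducible character ξ of G such that ker(ξ) < K (strict containment) and cod(ξ) > cod(χ). -/

import Mathlib

open CategoryTheory

/-- The kernel of (the character of) a finite-dimensional complex representation. -/
noncomputable def charKer {G : Type} [Group G] (V : FDRep ℂ G) : Subgroup G :=
  MonoidHom.ker (Representation.asGroupHom V.ρ)

/-- The codegree of a character: `|G : ker χ| / χ(1)`. -/
noncomputable def codeg {G : Type} [Group G] (V : FDRep ℂ G) : ℕ :=
  (charKer V).index / Module.finrank ℂ V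

/-- The set of codegrees of irreducible characters of `G`. -/
def codSet (G : Type) [Group G] : Set ℕ :=
  {n | ∃ V : FDRep ℂ G, Simple V ∧ codeg V = n}

/-- Inner product of class functions on a finite group. -/
noncomputable def innerChar (G : Type) [Group G] (f g : G → ℂ) : ℂ :=
  (∑ᶠ x : G, f x * starRingEnd ℂ (g x)) / Nat.card G

open scoped Classical in
/-- The induced character `θ^G` of a character `θ` of a subgroup `H ≤ G`. -/
noncomputable def indChar {G : Type} [Group G] (H : Subgroup G) (θ : FDRep ℂ ↥H) : G → ℂ :=
  fun g => (∑ᶠ x : G, if h : x * g * x⁻¹ ∈ H then θ.character ⟨x * g * x⁻¹, h⟩ else 0) /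
    Nat.card ↥H

/-!
Let `χ` be afforded by `ρ`. As `K = ker ρ` is not nilpotent, it has a Sylow subgroup `P` that is not
normal; let `M` be a maximal subgroup of `G` containing the normalizer of `P`. By the Frattini
argument `M` supplements every normal subgroup containing `K ⊓ M`, in particular `K`.

The representation induced from the restriction of `ρ` to `M` is `ρ` tensored with the permutation
representation on `G ⧸ M`, and summation over `G ⧸ M` maps it onto `ρ`. Let `ξ` be afforded by an
irreducible constituent `σ` of the kernel of this map. Since `ρ` stays irreducible on `M`, Frobenius
reciprocity yields an `M`-surjection `σ → ρ`, so `ker σ ⊓ M ≤ K`. If `ker σ` were not contained in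
`M`, then `σ` would also be irreducible on `M` and the surjection an isomorphism; `M` would then
supplement `ker σ ⊓ K`, which makes the isomorphism `G`-equivariant and `σ` the constituent `ρ`
embedded as constant functions, on which the sum is not zero. Hence `ker σ ≤ K ⊓ M < K`.

Writing `n = |G : M|`, one has `|G : K| n ≤ |G : ker ξ|` and `ξ(1) + χ(1) ≤ n χ(1)`, and these
together with `ξ(1)² ≤ |G : ker ξ|` give `cod χ < cod ξ`.
-/

section Supplements

variable {G : Type*} [Group G]

theorem normalizer_map_subtype_sup_eq_top {p : ℕ} [Fact p.Prime] {K T : Subgroup G} [K.Normal]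
    [T.Normal] (P : Sylow p K) [Finite (Sylow p ↥(K ⊓ T))]
    (hPT : (P : Subgroup K).map K.subtype ≤ T) :
    Subgroup.normalizer ((P : Subgroup K).map K.subtype : Set G) ⊔ T = ⊤ := by
  let ι : ↥(K ⊓ T) →* K := Subgroup.inclusion inf_le_left
  have hPι : (P : Subgroup K) ≤ ι.range := by
    rw [Subgroup.inclusion_range, Subgroup.inf_subgroupOf_left]
    exact Subgroup.map_le_iff_le_comap.1 hPT
  let Q : Sylow p ↥(K ⊓ T) := P.comapOfInjective ι (Subgroup.inclusion_injective _) hPι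
  have hQ : (Q : Subgroup ↥(K ⊓ T)).map (K ⊓ T).subtype = (P : Subgroup K).map K.subtype := by
    rw [Sylow.coe_comapOfInjective, ← Subgroup.subtype_comp_inclusion inf_le_left,
      ← Subgroup.map_map, Subgroup.map_comap_eq_self hPι]
  rw [eq_top_iff, ← Q.normalizer_sup_eq_top, hQ]
  exact sup_le_sup_left inf_le_right _

theorem exists_isCoatom_forall_normal_sup_eq_top [IsCoatomic (Subgroup G)] {K : Subgroup G}
    [K.Normal] [Finite K] (hK : ¬ Group.IsNilpotent K) :
    ∃ M : Subgroup G, IsCoatom M ∧ ∀ T : Subgroup G, T.Normal → K ⊓ M ≤ T → M ⊔ T = ⊤ := by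
  obtain ⟨p, hp, P, hP⟩ : ∃ (p : ℕ) (_ : Fact p.Prime) (P : Sylow p K),
      ¬ (P : Subgroup K).Normal := by
    contrapose! hK
    exact (Group.isNilpotent_of_finite_tfae.out 0 3).2 hK
  set Q : Subgroup G := (P : Subgroup K).map K.subtype
  have hQ : Subgroup.normalizer (Q : Set G) ≠ ⊤ := by
    intro htop
    have : Q.Normal := Subgroup.normalizer_eq_top_iff.1 htop
    have hPQ : Q.subgroupOf K = P := Subgroup.comap_map_eq_self_of_injective K.subtype_injective _
    exact hP (hPQ ▸ inferInstance)
  obtain ⟨M, hM, hQM⟩ := (eq_top_or_exists_le_coatom _).resolve_left hQ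
  have hQKM : Q ≤ K ⊓ M := le_inf (Subgroup.map_subtype_le _) (Subgroup.le_normalizer.trans hQM)
  refine ⟨M, hM, fun T _ hT ↦ ?_⟩
  have : Finite ↥(K ⊓ T) := Finite.of_injective _ (Subgroup.inclusion_injective inf_le_left)
  rw [eq_top_iff, ← normalizer_map_subtype_sup_eq_top P (hQKM.trans hT)]
  exact sup_le_sup_right hQM T

theorem index_inf_eq_mul_of_sup_eq_top {K M : Subgroup G} [K.Normal] (h : M ⊔ K = ⊤) :
    (K ⊓ M).index = K.index * M.index := by
  rw [← Subgroup.relIndex_mul_index (inf_le_right : K ⊓ M ≤ M), Subgroup.inf_relIndex_right,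
    ← Subgroup.relIndex_sup_right, h, Subgroup.relIndex_top_right]

theorem exists_mem_map_eq_of_sup_ker_eq_top {H : Type*} [MulOneClass H] {M : Subgroup G}
    {φ : G →* H} (h : M ⊔ φ.ker = ⊤) (g : G) : ∃ m : M, φ m = φ g := by
  obtain ⟨m, hm, z, hz, rfl⟩ := Subgroup.mem_sup_of_normal_right.1 (h ▸ Subgroup.mem_top g)
  exact ⟨⟨m, hm⟩, by rw [map_mul, MonoidHom.mem_ker.1 hz, mul_one]⟩

theorem ker_comp_subtype_le_iff {H₁ H₂ : Type*} [MulOneClass H₁] [MulOneClass H₂]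
    {M : Subgroup G} {φ : G →* H₁} {ψ : G →* H₂} :
    (φ.comp M.subtype).ker ≤ (ψ.comp M.subtype).ker ↔ φ.ker ⊓ M ≤ ψ.ker :=
  ⟨fun h g hg ↦ h (x := ⟨g, hg.2⟩) hg.1, fun h m hm ↦ h ⟨hm, m.2⟩⟩

end Supplements

section Irreducible

open Representation
open scoped MonoidAlgebra

section IntertwiningMap

/-- The inclusion of a subrepresentation, as an intertwining map. -/
def subrepresentationSubtype {k G V : Type*} [Semiring k] [Monoid G] [AddCommMonoid V] [Module k V]
    {ρ : Representation k G V} (S : Subrepresentation ρ) : IntertwiningMap S.toRepresentation ρ :=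
  S.toSubmodule.subtype.intertwiningMap_of_isIntertwiningMap _ _ fun _ _ ↦ rfl

variable {k G V W : Type*} [Semiring k] [Group G] [AddCommMonoid V] [Module k V]
  [AddCommMonoid W] [Module k W] {ρ : Representation k G V} {σ : Representation k G W}

theorem ker_le_ker_of_injective {f : IntertwiningMap σ ρ} (hf : Function.Injective f) :
    MonoidHom.ker ρ ≤ MonoidHom.ker σ := fun g hg ↦
  MonoidHom.mem_ker.2 <| LinearMap.ext fun w ↦ hf <| by
    rw [f.isIntertwining, MonoidHom.mem_ker.1 hg, Module.End.one_apply, Module.End.one_apply]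

theorem ker_le_ker_of_surjective {f : IntertwiningMap σ ρ} (hf : Function.Surjective f) :
    MonoidHom.ker σ ≤ MonoidHom.ker ρ := fun g hg ↦
  MonoidHom.mem_ker.2 <| LinearMap.ext fun v ↦ by
    obtain ⟨w, rfl⟩ := hf v
    rw [← f.isIntertwining, MonoidHom.mem_ker.1 hg, Module.End.one_apply, Module.End.one_apply]

end IntertwiningMap

section Monoid

variable {k G V : Type*} [Field k] [Monoid G] [AddCommGroup V] [Module k V]
  {ρ : Representation k G V}

theorem nontrivial_of_isIrreducible [ρ.IsIrreducible] : Nontrivial V :=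
  IsSimpleModule.nontrivial k[G] ρ.asModule

theorem isIrreducible_comp {H : Type*} [Monoid H] {φ : H →* G} [ρ.IsIrreducible]
    (h : ∀ g, ∃ a, ρ (φ a) = ρ g) : IsIrreducible (ρ.comp φ) where
  exists_pair_ne :=
    have : Nontrivial V := nontrivial_of_isIrreducible (ρ := ρ)
    ⟨⊥, ⊤, fun h ↦ bot_ne_top (congrArg Subrepresentation.toSubmodule h)⟩
  eq_bot_or_eq_top S := by
    let T : Subrepresentation ρ :=
      ⟨S.toSubmodule, fun g v hv ↦ (h g).elim fun a ha ↦ ha ▸ S.apply_mem_toSubmodule a hv⟩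
    exact (eq_bot_or_eq_top T).imp
      (fun hT ↦ Subrepresentation.toSubmodule_injective (congrArg (·.toSubmodule) hT))
      (fun hT ↦ Subrepresentation.toSubmodule_injective (congrArg (·.toSubmodule) hT))

theorem isIrreducible_toRepresentation_of_isAtom {S : Subrepresentation ρ} (hS : IsAtom S) :
    S.toRepresentation.IsIrreducible where
  exists_pair_ne := by
    refine ⟨⊥, ⊤, fun h ↦ hS.1 (Subrepresentation.toSubmodule_injective ?_)⟩
    exact S.toSubmodule.subsingleton_iff_eq_bot.1
      ((Submodule.subsingleton_iff k).1 (subsingleton_of_bot_eq_top (congrArg (·.toSubmodule) h)))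
  eq_bot_or_eq_top T := by
    let T' : Subrepresentation ρ := ⟨T.toSubmodule.map S.toSubmodule.subtype, by
      rintro g _ ⟨v, hv, rfl⟩
      exact ⟨_, T.apply_mem_toSubmodule g hv, rfl⟩⟩
    have hT' : T' ≤ S := Submodule.map_subtype_le _ _
    have hinj := Submodule.map_injective_of_injective S.toSubmodule.subtype_injective
    refine (hS.le_iff.1 hT').imp (fun h ↦ ?_) (fun h ↦ ?_)
    · exact Subrepresentation.toSubmodule_injective
        (hinj ((congrArg (·.toSubmodule) h).trans (Submodule.map_bot _).symm))
    · exact Subrepresentation.toSubmodule_injective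
        (hinj ((congrArg (·.toSubmodule) h).trans (Submodule.map_subtype_top _).symm))

theorem exists_le_isIrreducible_toRepresentation [FiniteDimensional k V] {S : Subrepresentation ρ}
    (hS : S ≠ ⊥) : ∃ T ≤ S, T.toRepresentation.IsIrreducible := by
  have : WellFoundedLT (Subrepresentation ρ) :=
    StrictMono.wellFoundedLT (f := Subrepresentation.toSubmodule) fun _ _ h ↦ h
  obtain ⟨T, hT, hTS⟩ := (IsAtomic.eq_bot_or_exists_atom_le S).resolve_left hS
  exact ⟨T, hTS, isIrreducible_toRepresentation_of_isAtom hT⟩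

theorem asAlgebraHom_surjective_of_isIrreducible [IsAlgClosed k] [FiniteDimensional k V]
    [ρ.IsIrreducible] : Function.Surjective ρ.asAlgebraHom := by
  intro f
  -- By Schur's lemma the commutant consists of scalars, so `f` lies in the double commutant.
  have hscalar := IsSimpleModule.algebraMap_end_bijective_of_isAlgClosed
    (A := k[G]) (V := ρ.asModule) k
  have : Module.Finite (Module.End k[G] ρ.asModule) ρ.asModule :=
    .of_restrictScalars_finite k _ _
  let F : Module.End (Module.End k[G] ρ.asModule) ρ.asModule :=
    { toFun := f
      map_add' := map_add f
      map_smul' := fun c v ↦ by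
        obtain ⟨z, rfl⟩ := hscalar.2 c
        exact map_smul f z v }
  obtain ⟨a, ha⟩ := Module.Finite.toModuleEnd_moduleEnd_surjective F
  exact ⟨a, LinearMap.ext fun v ↦ LinearMap.congr_fun ha v⟩

theorem span_range_eq_top_of_isIrreducible [IsAlgClosed k] [FiniteDimensional k V]
    [ρ.IsIrreducible] : Submodule.span k (Set.range ρ) = ⊤ := by
  refine eq_top_iff.2 fun f _ ↦ ?_
  obtain ⟨a, rfl⟩ := asAlgebraHom_surjective_of_isIrreducible (ρ := ρ) f
  rw [asAlgebraHom_def, MonoidAlgebra.lift_apply]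
  exact Submodule.sum_mem _ fun g _ ↦
    Submodule.smul_mem _ _ (Submodule.subset_span (Set.mem_range_self g))

end Monoid

theorem finrank_mul_self_le_index_ker {k G V : Type*} [Field k] [IsAlgClosed k] [Group G]
    [AddCommGroup V] [Module k V] [FiniteDimensional k V] {ρ : Representation k G V}
    [ρ.IsIrreducible] [(MonoidHom.ker ρ).FiniteIndex] :
    Module.finrank k V * Module.finrank k V ≤ (MonoidHom.ker ρ).index := by
  have := Fintype.ofFinite (G ⧸ MonoidHom.ker ρ)
  let b : G ⧸ MonoidHom.ker ρ → Module.End k V := fun x ↦ ρ x.out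
  have hb : Set.range ρ = Set.range b := by
    refine Set.Subset.antisymm ?_ (Set.range_subset_iff.2 fun x ↦ ⟨x.out, rfl⟩)
    rintro _ ⟨g, rfl⟩
    obtain ⟨z, hz⟩ := QuotientGroup.mk_out_eq_mul (MonoidHom.ker ρ) g
    exact ⟨g, by simp only [b, hz, map_mul, MonoidHom.mem_ker.1 z.2, mul_one]⟩
  have := finrank_range_le_card (R := k) b
  rwa [Set.finrank, ← hb, span_range_eq_top_of_isIrreducible, finrank_top, Module.finrank_linearMap,
    ← Nat.card_eq_fintype_card] at this

end Irreducible

section FunctionRep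

open Representation

variable {k G V W : Type*} [Semiring k] [Group G] [AddCommMonoid V] [Module k V]
  [AddCommMonoid W] [Module k W] (ρ : Representation k G V) {σ : Representation k G W}

/-- The representation of `G` on functions `X → V` for a `G`-set `X`, that is, the tensor product
of `ρ` with the permutation representation of `X`. For `X = G ⧸ M` it is isomorphic to the
representation induced from the restriction of `ρ` to `M`. -/
def functionRep (X : Type*) [MulAction G X] : Representation k G (X → V) where
  toFun g := (ρ g).compLeft X ∘ₗ LinearMap.funLeft k V (g⁻¹ • ·)
  map_one' := by ext; simp [LinearMap.funLeft]
  map_mul' g h := by ext; simp [LinearMap.funLeft, mul_smul]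

namespace functionRep

variable {ρ}

@[simp]
theorem apply_apply {X : Type*} [MulAction G X] (g : G) (f : X → V) (x : X) :
    functionRep ρ X g f x = ρ g (f (g⁻¹ • x)) :=
  rfl

variable (ρ) in
/-- The intertwining map from `functionRep ρ X` to `ρ` given by summation over `X`. -/
def sum (X : Type*) [MulAction G X] [Fintype X] : IntertwiningMap (functionRep ρ X) ρ :=
  (∑ x : X, LinearMap.proj (R := k) (φ := fun _ ↦ V) x).intertwiningMap_of_isIntertwiningMap _ _
    fun g f ↦ by
      simp only [LinearMap.sum_apply, LinearMap.proj_apply, apply_apply, ← map_sum]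
      exact congrArg (ρ g) (Equiv.sum_comp (MulAction.toPerm g⁻¹) f)

@[simp]
theorem sum_apply {X : Type*} [MulAction G X] [Fintype X] (f : X → V) :
    sum ρ X f = ∑ x, f x :=
  LinearMap.sum_apply ..

theorem sum_surjective {X : Type*} [MulAction G X] [Fintype X] [Nonempty X] :
    Function.Surjective (sum ρ X) := by
  classical
  intro v
  obtain ⟨x⟩ := ‹Nonempty X›
  exact ⟨Pi.single x v, by simp⟩

theorem ker_sum_ne_bot {k V X : Type*} [Ring k] [AddCommGroup V] [Module k V] [Nontrivial V]
    {ρ : Representation k G V} [MulAction G X] [Fintype X] [Nontrivial X] : (sum ρ X).ker ≠ ⊥ := by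
  classical
  intro h
  obtain ⟨v, hv⟩ := exists_ne (0 : V)
  obtain ⟨x, y, hxy⟩ := exists_pair_ne X
  have hker : (Pi.single x v - Pi.single y v : X → V) ∈ (sum ρ X).ker := by
    simp [IntertwiningMap.mem_ker]
  rw [h] at hker
  have hzero : (Pi.single x v - Pi.single y v : X → V) = 0 := hker
  exact hv (by simpa [hxy] using congrFun hzero x)

theorem finrank_ker_sum_add_finrank {k V X : Type*} [Field k] [AddCommGroup V] [Module k V]
    [FiniteDimensional k V] {ρ : Representation k G V} [MulAction G X] [Fintype X] [Nonempty X] :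
    Module.finrank k (sum ρ X).ker.toSubmodule + Module.finrank k V
      = Nat.card X * Module.finrank k V := by
  have h := LinearMap.finrank_range_add_finrank_ker (sum ρ X).toLinearMap
  rw [LinearMap.range_eq_top.2 sum_surjective, finrank_top, Module.finrank_pi_fintype,
    Finset.sum_const, Finset.card_univ, smul_eq_mul, ← Nat.card_eq_fintype_card] at h
  rw [← h, add_comm]
  rfl

variable {M : Subgroup G}

/-- One half of Frobenius reciprocity: an intertwining map from `σ` to the representation induced
from the restriction of `ρ` to `M`, evaluated at the coset `M`, is an intertwining map between the
restrictions to `M`. -/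
def frobenius (i : IntertwiningMap σ (functionRep ρ (G ⧸ M))) :
    IntertwiningMap (σ.comp M.subtype) (ρ.comp M.subtype) :=
  (LinearMap.proj ((1 : G) : G ⧸ M) ∘ₗ i.toLinearMap).intertwiningMap_of_isIntertwiningMap _ _
    fun m w ↦ by
      have hm : (m : G)⁻¹ • ((1 : G) : G ⧸ M) = (1 : G) :=
        QuotientGroup.eq.2 (by simp)
      simp [i.isIntertwining, hm]

theorem frobenius_apply (i : IntertwiningMap σ (functionRep ρ (G ⧸ M))) (w : W) :
    frobenius i w = i w (1 : G) :=
  rfl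

theorem frobenius_apply_apply (i : IntertwiningMap σ (functionRep ρ (G ⧸ M))) (m : M) (w : W) :
    frobenius i (σ m w) = ρ m (frobenius i w) :=
  LinearMap.congr_fun ((frobenius i).isIntertwining' m) w

theorem apply_mk_eq_frobenius (i : IntertwiningMap σ (functionRep ρ (G ⧸ M))) (w : W) (g : G) :
    i w g = ρ g (frobenius i (σ g⁻¹ w)) := by
  rw [frobenius_apply, i.isIntertwining, apply_apply, inv_inv, self_inv_apply]
  simp

theorem frobenius_ne_zero {i : IntertwiningMap σ (functionRep ρ (G ⧸ M))} (hi : i ≠ 0) :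
    frobenius i ≠ 0 := by
  contrapose! hi
  ext w x
  induction x using QuotientGroup.induction_on with
  | H g => simp [apply_mk_eq_frobenius, hi]

theorem apply_eq_frobenius {i : IntertwiningMap σ (functionRep ρ (G ⧸ M))}
    (h : M ⊔ (MonoidHom.ker σ ⊓ MonoidHom.ker ρ) = ⊤) (w : W) (x : G ⧸ M) :
    i w x = frobenius i w := by
  induction x using QuotientGroup.induction_on with
  | H g =>
    rw [← MonoidHom.ker_prod] at h
    obtain ⟨m, hm⟩ := exists_mem_map_eq_of_sup_ker_eq_top h g
    have hσ : σ m = σ g := congrArg Prod.fst hm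
    have hρ : ρ m = ρ g := congrArg Prod.snd hm
    rw [apply_mk_eq_frobenius, ← hρ, ← frobenius_apply_apply, hσ, self_inv_apply]

end functionRep

end FunctionRep

section Constituents

open Representation

namespace functionRep

variable {k G V W : Type*} [Field k] [Group G] [AddCommGroup V] [Module k V]
  [AddCommGroup W] [Module k W] {ρ : Representation k G V} {σ : Representation k G W}
  {M : Subgroup G} {i : IntertwiningMap σ (functionRep ρ (G ⧸ M))}

theorem sup_ker_inf_ker_ne_top [Fintype (G ⧸ M)] (hindex : (M.index : k) ≠ 0) (hi : i ≠ 0)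
    (hsum : (sum ρ (G ⧸ M)).comp i = 0) :
    M ⊔ (MonoidHom.ker σ ⊓ MonoidHom.ker ρ) ≠ ⊤ := by
  intro h
  refine frobenius_ne_zero hi (IntertwiningMap.ext (LinearMap.ext fun w ↦ ?_))
  have hw : ∑ x, i w x = 0 := by simpa using DFunLike.congr_fun hsum w
  simp only [apply_eq_frobenius h, Finset.sum_const, Finset.card_univ,
    ← Nat.card_eq_fintype_card, ← Nat.cast_smul_eq_nsmul k] at hw
  exact (smul_eq_zero.1 hw).resolve_left hindex

theorem frobenius_surjective [ρ.IsIrreducible] (hM : M ⊔ MonoidHom.ker ρ = ⊤) (hi : i ≠ 0) :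
    Function.Surjective (frobenius i) :=
  have : IsIrreducible (ρ.comp M.subtype) :=
    isIrreducible_comp (exists_mem_map_eq_of_sup_ker_eq_top hM)
  (IsIrreducible.surjective_or_eq_zero (frobenius i)).resolve_right (frobenius_ne_zero hi)

theorem frobenius_injective [σ.IsIrreducible] (hM : M ⊔ MonoidHom.ker σ = ⊤) (hi : i ≠ 0) :
    Function.Injective (frobenius i) :=
  have : IsIrreducible (σ.comp M.subtype) :=
    isIrreducible_comp (exists_mem_map_eq_of_sup_ker_eq_top hM)
  (IsIrreducible.injective_or_eq_zero (frobenius i)).resolve_right (frobenius_ne_zero hi)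

theorem ker_le_ker_inf_of_sum_comp_eq_zero [Fintype (G ⧸ M)] [ρ.IsIrreducible]
    [σ.IsIrreducible] (hM : IsCoatom M)
    (hsup : ∀ T : Subgroup G, T.Normal → MonoidHom.ker ρ ⊓ M ≤ T → M ⊔ T = ⊤)
    (hindex : (M.index : k) ≠ 0) (hi : i ≠ 0) (hsum : (sum ρ (G ⧸ M)).comp i = 0) :
    MonoidHom.ker σ ≤ MonoidHom.ker ρ ⊓ M := by
  have hσM : MonoidHom.ker σ ≤ M := by
    by_contra h
    have hMσ : M ⊔ MonoidHom.ker σ = ⊤ := hM.2 _ (left_lt_sup.2 h)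
    have hρσ : MonoidHom.ker ρ ⊓ M ≤ MonoidHom.ker σ :=
      ker_comp_subtype_le_iff.1 (ker_le_ker_of_injective (frobenius_injective hMσ hi))
    exact sup_ker_inf_ker_ne_top hindex hi hsum
      (hsup _ inferInstance (le_inf hρσ inf_le_left))
  have hσρ : MonoidHom.ker σ ⊓ M ≤ MonoidHom.ker ρ :=
    ker_comp_subtype_le_iff.1 <| ker_le_ker_of_surjective <|
      frobenius_surjective (hsup _ inferInstance inf_le_left) hi
  exact le_inf ((le_inf le_rfl hσM).trans hσρ) hσM

theorem exists_isIrreducible_ker_le_ker_inf [FiniteDimensional k V] [ρ.IsIrreducible]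
    (hM : IsCoatom M)
    (hsup : ∀ T : Subgroup G, T.Normal → MonoidHom.ker ρ ⊓ M ≤ T → M ⊔ T = ⊤)
    (hindex : (M.index : k) ≠ 0) :
    ∃ S : Subrepresentation (functionRep ρ (G ⧸ M)), S.toRepresentation.IsIrreducible ∧
      MonoidHom.ker S.toRepresentation ≤ MonoidHom.ker ρ ⊓ M ∧
      Module.finrank k S.toSubmodule + Module.finrank k V ≤ M.index * Module.finrank k V := by
  have : M.FiniteIndex := ⟨fun h ↦ hindex (by rw [h, Nat.cast_zero])⟩
  have := Fintype.ofFinite (G ⧸ M)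
  have : Nontrivial V := nontrivial_of_isIrreducible (ρ := ρ)
  have : Nontrivial (G ⧸ M) := QuotientGroup.nontrivial_iff.2 hM.1
  obtain ⟨S, hSsum, hS⟩ :=
    exists_le_isIrreducible_toRepresentation (ker_sum_ne_bot (ρ := ρ) (X := G ⧸ M))
  have hsum : (sum ρ (G ⧸ M)).comp (subrepresentationSubtype S) = 0 :=
    IntertwiningMap.ext (LinearMap.ext fun v ↦ hSsum v.2)
  have hne : subrepresentationSubtype S ≠ 0 := by
    intro h
    have := nontrivial_of_isIrreducible (ρ := S.toRepresentation)
    obtain ⟨v, hv⟩ := exists_ne (0 : S.toSubmodule)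
    exact hv (Subtype.ext (DFunLike.congr_fun h v))
  refine ⟨S, hS, ker_le_ker_inf_of_sum_comp_eq_zero hM hsup hindex hne hsum, ?_⟩
  have hfinrank := finrank_ker_sum_add_finrank (ρ := ρ) (X := G ⧸ M)
  exact (Nat.add_le_add_right (Submodule.finrank_mono hSsum) _).trans_eq hfinrank

end functionRep

end Constituents

section Simple

open Representation
open scoped MonoidAlgebra

universe u v

variable {k : Type u} {G : Type v} [Field k] [Monoid G]

theorem simple_of_isIrreducible {V : FDRep k G} (hV : IsIrreducible V.ρ) : Simple V := by
  let F := forget₂ (FDRep k G) (Rep k G)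
  have : F.PreservesZeroMorphisms := ⟨fun _ _ ↦ rfl⟩
  have : IsSimpleModule k[G] (Representation.asModule V.ρ) :=
    (irreducible_iff_isSimpleModule_asModule _).1 hV
  have : Simple (Rep.toModuleMonoidAlgebra.obj (F.obj V)) :=
    (simple_iff_isSimpleModule (R := k[G])).2 this
  have := (simple_obj_iff Rep.toModuleMonoidAlgebra (F.obj V)).1 this
  exact F.simple_of_simple_obj V

theorem isIrreducible_of_simple {V : FDRep k G} (hV : Simple V) : IsIrreducible V.ρ where
  exists_pair_ne := by
    refine ⟨⊥, ⊤, fun h ↦ id_nonzero V ?_⟩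
    ext v
    have hv : v ∈ (⊥ : Subrepresentation V.ρ).toSubmodule := h ▸ Submodule.mem_top
    exact hv
  eq_bot_or_eq_top S := by
    let i : FDRep.of S.toRepresentation ⟶ V :=
      ⟨FGModuleCat.ofHom S.toSubmodule.subtype, fun _ ↦ rfl⟩
    have : Mono i := ConcreteCategory.mono_of_injective i S.toSubmodule.subtype_injective
    refine (eq_or_ne i 0).imp (fun hi ↦ ?_) (fun hi ↦ ?_)
    · have : S.toSubmodule.subtype = 0 := congrArg (·.hom.hom.hom) hi
      exact Subrepresentation.toSubmodule_injective <| by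
        rw [← Submodule.range_subtype S.toSubmodule, this, LinearMap.range_zero]; rfl
    · have := isIso_of_mono_of_nonzero hi
      refine eq_top_iff.2 fun v _ ↦ ?_
      obtain ⟨w, rfl⟩ := (ConcreteCategory.bijective_of_isIso i).2 v
      exact w.2

end Simple

theorem charKer_eq_ker {G : Type} [Group G] (V : FDRep ℂ G) : charKer V = MonoidHom.ker V.ρ := by
  ext g
  simp only [charKer, MonoidHom.mem_ker, Units.ext_iff]
  rfl

theorem nat_div_lt_div_of_mul_self_le {a b c d n : ℕ} (hb : 0 < b) (hd : 0 < d) (hc : a * n ≤ c)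
    (hdb : d + b ≤ n * b) (hdd : d * d ≤ c) : a / b < c / d := by
  set q := a / b
  have hqb : q * b ≤ a := Nat.div_mul_le_self a b
  refine (Nat.le_div_iff_mul_le hd).2 ?_
  rcases Nat.lt_or_ge q d with hqd | hdq
  · exact (Nat.mul_le_mul_right d hqd).trans hdd
  · calc (q + 1) * d = q * d + d := by ring
      _ ≤ q * d + q * b := by gcongr; exact hdq.trans (Nat.le_mul_of_pos_right q hb)
      _ = q * (d + b) := by ring
      _ ≤ q * (n * b) := by gcongr
      _ = q * b * n := by ring
      _ ≤ a * n := by gcongr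
      _ ≤ c := hc

theorem codeg_lt_codeg {G : Type} [Group G] [Finite G] {χ ξ : FDRep ℂ G} (hχ : Simple χ)
    (hξ : Simple ξ) {n : ℕ}
    (hindex : (MonoidHom.ker χ.ρ).index * n ≤ (MonoidHom.ker ξ.ρ).index)
    (hfinrank : Module.finrank ℂ ξ + Module.finrank ℂ χ ≤ n * Module.finrank ℂ χ) :
    codeg χ < codeg ξ := by
  have hχirr := isIrreducible_of_simple hχ
  have hξirr := isIrreducible_of_simple hξ
  have : Nontrivial χ := nontrivial_of_isIrreducible (ρ := χ.ρ)
  have : Nontrivial ξ := nontrivial_of_isIrreducible (ρ := ξ.ρ)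
  rw [codeg, codeg, charKer_eq_ker, charKer_eq_ker]
  exact nat_div_lt_div_of_mul_self_le Module.finrank_pos Module.finrank_pos hindex hfinrank
    finrank_mul_self_le_index_ker

theorem stmt_6 {G : Type} [Group G] [Finite G] (χ : FDRep ℂ G) (hχ : Simple χ)
    (F : Subgroup G)
    (hF : IsGreatest {N : Subgroup G | N.Normal ∧ Group.IsNilpotent ↥N} F)
    (hK : ¬ charKer χ ≤ F) :
    ∃ ξ : FDRep ℂ G, Simple ξ ∧ charKer ξ < charKer χ ∧ codeg χ < codeg ξ := by
  rw [charKer_eq_ker] at hK ⊢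
  have hnil : ¬ Group.IsNilpotent (MonoidHom.ker χ.ρ) := fun h ↦ hK (hF.2 ⟨inferInstance, h⟩)
  have := isIrreducible_of_simple hχ
  obtain ⟨M, hM, hsup⟩ := exists_isCoatom_forall_normal_sup_eq_top hnil
  have hMK : M ⊔ MonoidHom.ker χ.ρ = ⊤ := hsup _ inferInstance inf_le_left
  obtain ⟨S, hS, hker, hfinrank⟩ := functionRep.exists_isIrreducible_ker_le_ker_inf hM hsup
    (Nat.cast_ne_zero.2 Subgroup.index_ne_zero_of_finite)
  let ξ : FDRep ℂ G := FDRep.of S.toRepresentation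
  have hξ : Simple ξ := simple_of_isIrreducible hS
  refine ⟨ξ, hξ, ?_, codeg_lt_codeg hχ hξ ?_ hfinrank⟩
  · rw [charKer_eq_ker]
    exact hker.trans_lt (inf_lt_left.2 fun h ↦ hM.1 ((sup_eq_left.2 h).symm.trans hMK))
  · rw [← index_inf_eq_mul_of_sup_eq_top hMK]
    exact Subgroup.index_antitone hker
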